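/- arXiv:2008.11768 — 2 statements merged into one kernel-verified Lean document; each statement's English description precedes it below -/
import Mathlib

section
/- Let d ≥ 1. There exists a constant C > 0, depending only on d, such that for every integer N ≥ 2 and every β ∈ (0, √d), ∫_{B(0,1)^N} ∏_{i=1}^N (min_{j ≠ i} |z_i − z_j|)^{−β²/2} dz_1 … dz_N ≤ C^N (d − β²)^{−⌊N/2⌋} N^{Nβ²/(2d)}. -/
open MeasureTheory

open Metric Set Module
open scoped ENNReal Finset

/-! The points can be 2-coloured so that each has a nearest neighbour of the other colour. The
smaller colour class `A` is matched by a subset `B` of the other one, of the same size and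
containing nearest neighbours of all points of `A`. The product over `A ∪ B` is at most the square
of the larger of the products over `A` and `B`. Once the smaller product is dropped, every remaining
point has a nearest neighbour in a lower layer, so the points can be integrated out one at a time,
each against its distance to at most `N` fixed points. A point with exponent `s` contributes a
factor of order `N ^ (s / d) / (d - s)`; at most `N / 2` of the points carry the doubled exponent
`s = β ^ 2`, and there are at most `3 ^ N` choices of layers to sum over. -/

section NearestNeighbor

variable {α R : Type*} [LinearOrder R] {w : α → α → R}

/-- `j` is a nearest neighbour of `i` among the other points, distances being given by `w`.
Ties are allowed, so a point may have several nearest neighbours. -/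
def IsNearestNeighbor (w : α → α → R) (i j : α) : Prop :=
  j ≠ i ∧ ∀ k, k ≠ i → w i j ≤ w i k

lemma exists_isNearestNeighbor_notMem [Finite α] [Nontrivial α] (w : α → α → R) {s : Set α}
    (hs : s ≠ univ) :
    ∃ i ∉ s, ∃ j, IsNearestNeighbor w i j ∧ ∀ k ∉ s, ∀ l, l ≠ k → w i j ≤ w k l := by
  obtain ⟨i₀, hi₀⟩ := (ne_univ_iff_exists_notMem s).1 hs
  obtain ⟨j₀, hj₀⟩ := exists_ne i₀
  obtain ⟨⟨i, j⟩, ⟨hi, hij⟩, hmin⟩ := exists_min_image {p : α × α | p.1 ∉ s ∧ p.2 ≠ p.1}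
    (fun p => w p.1 p.2) (toFinite _) ⟨(i₀, j₀), hi₀, hj₀⟩
  exact ⟨i, hi, j, ⟨hij, fun k hk => hmin (i, k) ⟨hi, hk⟩⟩, fun k hk l hl => hmin (k, l) ⟨hk, hl⟩⟩

/-- The set `s` is 2-coloured by `c` so that every point of `s` has a nearest neighbour of the
other colour in `s`. -/
def IsNearestNeighborColoring (w : α → α → R) (c : α → Bool) (s : Set α) : Prop :=
  ∀ i ∈ s, ∃ j ∈ s, IsNearestNeighbor w i j ∧ c j = !c i

lemma IsNearestNeighborColoring.exists_ssuperset [Finite α] [Nontrivial α]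
    (hw : ∀ i j, w i j = w j i) {c : α → Bool} {s : Set α}
    (hc : IsNearestNeighborColoring w c s) (hs : s ≠ univ) :
    ∃ c' s', s ⊂ s' ∧ IsNearestNeighborColoring w c' s' := by
  classical
  obtain ⟨i, hi, j, hij, hmin⟩ := exists_isNearestNeighbor_notMem w hs
  have hcj : Function.update c i (!c j) j = c j := Function.update_of_ne hij.1 _ _
  refine ⟨Function.update c i (!c j), insert i (insert j s),
    (ssubset_insert hi).trans_subset (insert_subset_insert (subset_insert j s)), ?_⟩
  intro k hk
  by_cases hks : k ∈ s
  · obtain ⟨l, hl, hkl, hcl⟩ := hc k hks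
    refine ⟨l, by simp [hl], hkl, ?_⟩
    rwa [Function.update_of_ne (ne_of_mem_of_not_mem hl hi),
      Function.update_of_ne (ne_of_mem_of_not_mem hks hi)]
  rcases hk with rfl | rfl | hk
  · exact ⟨j, by simp, hij, by simp [hcj]⟩
  · -- By minimality of `w i k`, the points `i` and `k` are nearest neighbours of each other.
    exact ⟨i, by simp, ⟨hij.1.symm, fun l hl => hw k i ▸ hmin k hks l hl⟩, by simp [hcj]⟩
  · exact absurd hk hks

theorem exists_isNearestNeighborColoring_univ [Finite α] [Nontrivial α]
    (hw : ∀ i j, w i j = w j i) : ∃ c, IsNearestNeighborColoring w c univ := by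
  obtain ⟨s, ⟨c, hc⟩, hmax⟩ := (toFinite {s | ∃ c, IsNearestNeighborColoring w c s}).exists_maximal
    ⟨∅, fun _ => true, fun _ h => h.elim⟩
  by_cases hs : s = univ
  · exact ⟨c, hs ▸ hc⟩
  · obtain ⟨c', s', hss', hc'⟩ := hc.exists_ssuperset hw hs
    exact absurd (hmax ⟨c', hc'⟩ hss'.subset) hss'.not_subset

variable [Fintype α]

/-- A partition of the points into layers `0`, `1`, `2`, the first two of the same size, such that
each point outside layer `0` has a nearest neighbour in a lower layer, and each point of
layer `0` has one in layer `1`. -/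
structure IsBalancedLayering (w : α → α → R) (r : α → Fin 3) : Prop where
  card_eq : #{i | r i = 0} = #{i | r i = 1}
  exists_nearest_eq_one : ∀ i, r i = 0 → ∃ j, r j = 1 ∧ IsNearestNeighbor w i j
  exists_nearest_lt : ∀ i, r i ≠ 0 → ∃ j, r j < r i ∧ IsNearestNeighbor w i j

theorem exists_isBalancedLayering [Nontrivial α] (hw : ∀ i j, w i j = w j i) :
    ∃ r, IsBalancedLayering w r := by
  classical
  obtain ⟨c, hc⟩ := exists_isNearestNeighborColoring_univ hw
  obtain ⟨b, hb⟩ : ∃ b, #{i | c i = b} ≤ #{i | c i = !b} :=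
    (le_total #{i | c i = true} #{i | c i = false}).elim (⟨true, ·⟩) (⟨false, ·⟩)
  choose nn _ hnn hcnn using fun i => hc i (mem_univ i)
  -- Layer `1` must contain the chosen neighbours of layer `0`, which are at most `#(layer 0)` many.
  obtain ⟨B, hnnB, hB, hcard⟩ := Finset.exists_subsuperset_card_eq
    (s := ({i | c i = b} : Finset α).image nn) (t := {i | c i = !b})
    (by simp +contextual [Finset.image_subset_iff, hcnn]) Finset.card_image_le hb
  let r (i : α) : Fin 3 := if c i = b then 0 else if i ∈ B then 1 else 2
  have hr0 (i : α) : r i = 0 ↔ c i = b := by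
    simp only [r]; split_ifs <;> simp_all
  have hr1 (i : α) : r i = 1 ↔ i ∈ B := by
    have hcB : i ∈ B → c i = !b := fun hi => by simpa using hB hi
    simp only [r]; split_ifs <;> simp_all
  refine ⟨r, by simp only [hr0, hr1, Finset.filter_univ_mem, hcard], fun i hi => ?_, fun i hi => ?_⟩
  · exact ⟨nn i, (hr1 _).2 (hnnB (Finset.mem_image_of_mem nn (by simpa [hr0] using hi))), hnn i⟩
  · refine ⟨nn i, ?_, hnn i⟩
    rw [(hr0 (nn i)).2 ((hcnn i).trans (Bool.not_eq.2 (mt (hr0 i).2 hi)))]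
    exact Fin.pos_iff_ne_zero.2 hi

lemma IsBalancedLayering.swap {r : α → Fin 3} (hr : IsBalancedLayering w r) :
    IsBalancedLayering w (Equiv.swap 0 1 ∘ r) where
  card_eq := by
    simpa [Equiv.swap_apply_eq_iff] using hr.card_eq.symm
  exists_nearest_eq_one i hi := by
    have hi : r i = 1 := by simpa [Equiv.swap_apply_eq_iff] using hi
    obtain ⟨j, hj, hij⟩ := hr.exists_nearest_lt i (by simp [hi])
    have hj : r j = 0 := by omega
    exact ⟨j, by simp [hj], hij⟩
  exists_nearest_lt i hi := by
    have hi : r i ≠ 1 := fun h => hi (by simp [h])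
    by_cases hi0 : r i = 0
    · obtain ⟨j, hj, hij⟩ := hr.exists_nearest_eq_one i hi0
      exact ⟨j, by simp [hi0, hj], hij⟩
    · obtain ⟨j, hj, hij⟩ := hr.exists_nearest_lt i hi0
      have hlt : ∀ a b : Fin 3, b ≠ 0 → b ≠ 1 → a < b →
          Equiv.swap 0 1 a < Equiv.swap 0 1 b := by decide
      exact ⟨j, hlt _ _ hi0 hi hj, hij⟩

/-- The multiplicity with which a point of each layer is counted once the layer `0` is discarded
and the layer `1` is doubled to compensate for it. -/
def layerWeight : Fin 3 → ℕ := ![0, 2, 1]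

lemma prod_le_prod_pow_layerWeight {M : Type*} [CommMonoid M] [PartialOrder M]
    [IsOrderedMonoid M] (r : α → Fin 3) (p : α → M)
    (h : ∏ i with r i = 0, p i ≤ ∏ i with r i = 1, p i) :
    ∏ i, p i ≤ ∏ i, p i ^ layerWeight (r i) := by
  have hfiber (k : Fin 3) : ∏ i with r i = k, p i ^ layerWeight (r i) =
      (∏ i with r i = k, p i) ^ layerWeight k := by
    rw [← Finset.prod_pow]
    exact Finset.prod_congr rfl fun i hi => by rw [(Finset.mem_filter.1 hi).2]
  calc ∏ i, p i = ∏ k, ∏ i with r i = k, p i := (Finset.prod_fiberwise _ r p).symm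
    _ ≤ ∏ k, ∏ i with r i = k, p i ^ layerWeight (r i) := by
      simp only [hfiber, Fin.prod_univ_three]
      simp only [layerWeight, Matrix.cons_val, pow_zero, one_mul, pow_one, pow_two]
      exact mul_le_mul_left (mul_le_mul_left h _) _
    _ = ∏ i, p i ^ layerWeight (r i) := Finset.prod_fiberwise _ r _

lemma exists_isBalancedLayering_prod_le [Nontrivial α] {M : Type*} [CommMonoid M] [LinearOrder M]
    [IsOrderedMonoid M] (hw : ∀ i j, w i j = w j i) (p : α → M) :
    ∃ r, IsBalancedLayering w r ∧ ∏ i, p i ≤ ∏ i, p i ^ layerWeight (r i) := by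
  obtain ⟨r, hr⟩ := exists_isBalancedLayering hw
  rcases le_total (∏ i with r i = 0, p i) (∏ i with r i = 1, p i) with h | h
  · exact ⟨r, hr, prod_le_prod_pow_layerWeight r p h⟩
  · exact ⟨_, hr.swap, prod_le_prod_pow_layerWeight _ p
      (by simpa [Equiv.swap_apply_eq_iff] using h)⟩

lemma card_layer_one_le {r : α → Fin 3} (hr : #{i | r i = 0} = #{i | r i = 1}) :
    #{i | r i = 1} ≤ Fintype.card α / 2 := by
  have hsum := Finset.card_eq_sum_card_fiberwise (f := r) (s := Finset.univ) (t := Finset.univ)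
    (by simp)
  rw [Fin.sum_univ_three, Finset.card_univ] at hsum
  omega

lemma sum_layerWeight {r : α → Fin 3} (hr : #{i | r i = 0} = #{i | r i = 1}) :
    ∑ i, layerWeight (r i) = Fintype.card α := by
  calc ∑ i, layerWeight (r i) = ∑ k, #{i | r i = k} * layerWeight k := by
        rw [← Finset.sum_fiberwise _ r]
        exact Finset.sum_congr rfl fun k _ =>
          Finset.sum_const_nat fun i hi => by rw [(Finset.mem_filter.1 hi).2]
    _ = ∑ k, #{i | r i = k} := by
        simp only [Fin.sum_univ_three, layerWeight, Matrix.cons_val, hr]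
        ring
    _ = Fintype.card α := (Finset.card_eq_sum_card_fiberwise (by simp)).symm

end NearestNeighbor

section Triangular

variable {ι κ : Type*} [Fintype ι] [DecidableEq ι] [LinearOrder κ] {X : ι → Type*}
  [∀ i, MeasurableSpace (X i)] {μ : ∀ i, Measure (X i)} [∀ i, SigmaFinite (μ i)]

theorem lintegral_prod_le_prod_of_dependsOn (r : ι → κ) {φ : ι → (∀ i, X i) → ℝ≥0∞} {K : ι → ℝ≥0∞}
    (hφm : ∀ i, Measurable (φ i)) (hφ : ∀ i, DependsOn (φ i) (insert i {j | r j < r i}))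
    (hK : ∀ i z, ∫⁻ x, φ i (Function.update z i x) ∂μ i ≤ K i) :
    ∫⁻ z, ∏ i, φ i z ∂Measure.pi μ ≤ ∏ i, K i := by
  rcases isEmpty_or_nonempty (∀ i, X i) with h | h
  · rw [lintegral_of_isEmpty]; exact zero_le
  obtain ⟨z₀⟩ := h
  suffices ∀ s : Finset ι, ∀ z, (∫⋯∫⁻_s, (fun z => ∏ i ∈ s, φ i z) ∂μ) z ≤ ∏ i ∈ s, K i by
    rw [lintegral_eq_lmarginal_univ z₀]
    exact this Finset.univ z₀
  intro s
  induction s using Finset.induction_on_max_value r with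
  | empty => simp only [lmarginal_empty, Finset.prod_empty, le_refl, implies_true]
  | insert a s ha hmax ih =>
    intro z
    have hinner (y : ∀ i, X i) : ∫⁻ x, ∏ i ∈ insert a s, φ i (Function.update y a x) ∂μ a ≤
        K a * ∏ i ∈ s, φ i y := by
      have hconst (x : X a) : ∏ i ∈ s, φ i (Function.update y a x) = ∏ i ∈ s, φ i y :=
        Finset.prod_congr rfl fun i hi => hφ i fun j hj => Function.update_of_ne (by
          rintro rfl
          rcases hj with rfl | hj
          · exact ha hi
          · exact (hmax i hi).not_gt hj) _ _
      simp only [Finset.prod_insert ha, hconst]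
      exact (lintegral_mul_const _ ((hφm a).comp (measurable_update y))).trans_le
        (mul_le_mul_left (hK a y) _)
    have hm : Measurable fun z => ∏ i ∈ s, φ i z := Finset.measurable_prod _ fun i _ => hφm i
    rw [lmarginal_insert' _ (Finset.measurable_prod _ fun i _ => hφm i) ha]
    calc _ ≤ (∫⋯∫⁻_s, (fun y => K a * ∏ i ∈ s, φ i y) ∂μ) z := lmarginal_mono hinner z
      _ = K a * (∫⋯∫⁻_s, (fun y => ∏ i ∈ s, φ i y) ∂μ) z :=
        lintegral_const_mul _ (hm.comp measurable_updateFinset)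
      _ ≤ _ := by rw [Finset.prod_insert ha]; gcongr; exact ih z

end Triangular

section InfEDist

lemma antitone_ennreal_rpow_neg {b : ℝ} (hb : 0 ≤ b) : Antitone fun x : ℝ≥0∞ => x ^ (-b) := by
  intro x y h
  simp only [ENNReal.rpow_neg, ENNReal.inv_le_inv]
  exact ENNReal.rpow_le_rpow h hb

lemma ofReal_rpow_neg_le {x a : ℝ} (hx : 0 ≤ x) (ha : 0 ≤ a) :
    ENNReal.ofReal (x ^ (-a)) ≤ ENNReal.ofReal x ^ (-a) := by
  rcases hx.eq_or_lt with rfl | hx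
  · rcases ha.eq_or_lt with rfl | ha
    · simp
    · simp [ha]
  · rw [ENNReal.ofReal_rpow_of_pos hx]

variable {ι X : Type*}

lemma IsNearestNeighbor.iInf_dist_eq [PseudoMetricSpace X] {z : ι → X} {i j : ι}
    (h : IsNearestNeighbor (fun i j => dist (z i) (z j)) i j) :
    ⨅ k : {k // k ≠ i}, dist (z i) (z k) = dist (z i) (z j) := by
  have : Nonempty {k // k ≠ i} := ⟨⟨j, h.1⟩⟩
  exact ciInf_eq_of_forall_ge_of_forall_gt_exists_lt (fun k => h.2 k k.2) fun _ hw => ⟨⟨j, h.1⟩, hw⟩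

lemma IsNearestNeighbor.ofReal_iInf_dist_rpow_neg_le [PseudoMetricSpace X] {z : ι → X} {i j : ι}
    (h : IsNearestNeighbor (fun i j => dist (z i) (z j)) i j) {T : Set ι} (hj : j ∈ T) {a : ℝ}
    (ha : 0 ≤ a) :
    ENNReal.ofReal ((⨅ k : {k // k ≠ i}, dist (z i) (z k)) ^ (-a)) ≤
      infEDist (z i) (z '' T) ^ (-a) := by
  rw [h.iInf_dist_eq]
  refine (ofReal_rpow_neg_le dist_nonneg ha).trans ?_
  rw [← edist_dist]
  exact antitone_ennreal_rpow_neg ha (infEDist_le_edist_of_mem (mem_image_of_mem z hj))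

lemma dependsOn_infEDist_image [PseudoEMetricSpace X] (i : ι) (T : Set ι) :
    DependsOn (fun z : ι → X => infEDist (z i) (z '' T)) (insert i T) := by
  intro y z h
  simp only [h i (mem_insert i T), image_congr fun j hj => h j (mem_insert_of_mem i hj)]

lemma measurable_infEDist_image [PseudoEMetricSpace X] [MeasurableSpace X]
    [OpensMeasurableSpace X] [SecondCountableTopology X] (i : ι) {T : Set ι} (hT : T.Countable) :
    Measurable fun z : ι → X => infEDist (z i) (z '' T) := by
  simp only [infEDist, iInf_image]
  exact .biInf T hT fun j _ => (measurable_pi_apply i).edist (measurable_pi_apply j)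

end InfEDist

lemma infEDist_rpow_neg_le {X : Type*} [PseudoMetricSpace X] {b : ℝ} (hb : 0 ≤ b) (ρ : ℝ)
    (t : Finset X) (x : X) :
    infEDist x t ^ (-b) ≤ ENNReal.ofReal ρ ^ (-b) +
      ∑ y ∈ t, (ball y ρ).indicator (fun x => edist x y ^ (-b)) x := by
  rcases le_or_gt (ENNReal.ofReal ρ) (infEDist x t) with hρ | hρ
  · exact (antitone_ennreal_rpow_neg hb hρ).trans le_self_add
  · have hne : t.Nonempty := Finset.nonempty_iff_ne_empty.2 fun h => by simp [h] at hρ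
    obtain ⟨y, hy, hxy⟩ := t.finite_toSet.isCompact.exists_infEDist_eq_edist hne x
    have hmem : x ∈ ball y ρ := by
      rwa [hxy, edist_dist, ENNReal.ofReal_lt_ofReal_iff_of_nonneg dist_nonneg] at hρ
    calc infEDist x t ^ (-b) = (ball y ρ).indicator (fun x => edist x y ^ (-b)) x := by
          rw [hxy, indicator_of_mem hmem]
      _ ≤ ∑ y ∈ t, (ball y ρ).indicator (fun x => edist x y ^ (-b)) x :=
          Finset.single_le_sum (f := fun y => (ball y ρ).indicator (fun x => edist x y ^ (-b)) x)
            (fun _ _ => zero_le) hy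
      _ ≤ _ := le_add_self

section Haar

variable {E : Type*} [NormedAddCommGroup E] [NormedSpace ℝ E] [FiniteDimensional ℝ E]
  [Nontrivial E] [MeasurableSpace E] [BorelSpace E] (μ : Measure E) [μ.IsAddHaarMeasure] {b ρ : ℝ}

lemma integrableOn_norm_rpow_neg_ball (hb : b < finrank ℝ E) (ρ : ℝ) :
    IntegrableOn (fun x : E => ‖x‖ ^ (-b)) (ball 0 ρ) μ := by
  refine integrableOn_ball_of_norm_le_rpow (C := 1) (α := b) finrank_pos hb ?_
    (measurable_norm.pow_const _).aestronglyMeasurable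
  filter_upwards with x
  rw [one_mul, Real.norm_of_nonneg (by positivity)]

lemma setIntegral_norm_rpow_neg_ball (hb : b < finrank ℝ E) (hρ : 0 ≤ ρ) :
    ∫ x in ball (0 : E) ρ, ‖x‖ ^ (-b) ∂μ =
      finrank ℝ E * (ρ ^ (finrank ℝ E - b) / (finrank ℝ E - b)) * μ.real (ball 0 1) := by
  have hball : (ball (0 : E) ρ).indicator (fun x => ‖x‖ ^ (-b)) =
      fun x => (Iio ρ).indicator (fun s : ℝ => s ^ (-b)) ‖x‖ := by
    ext x
    simp [indicator]
  have hpow : ∀ s ∈ Ioi (0 : ℝ), s ^ (finrank ℝ E - 1) • (Iio ρ).indicator (fun s => s ^ (-b)) s =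
      (Iio ρ).indicator (fun s => s ^ (finrank ℝ E - 1 - b)) s := fun s hs => by
    have hd : ((finrank ℝ E - 1 : ℕ) : ℝ) = finrank ℝ E - 1 := Nat.cast_pred finrank_pos
    simp only [indicator, smul_eq_mul, mul_ite, mul_zero]
    rw [← Real.rpow_natCast, hd, ← Real.rpow_add hs, sub_eq_add_neg _ b]
  rw [← integral_indicator measurableSet_ball, hball, integral_fun_norm_addHaar μ,
    setIntegral_congr_fun measurableSet_Ioi hpow, setIntegral_indicator measurableSet_Iio,
    Ioi_inter_Iio, ← integral_Ioc_eq_integral_Ioo, ← intervalIntegral.integral_of_le hρ,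
    integral_rpow (Or.inl (by linarith)), Real.zero_rpow (by linarith)]
  simp only [nsmul_eq_mul, smul_eq_mul]
  ring_nf

lemma setLIntegral_edist_rpow_neg_ball (hb : b < finrank ℝ E) (hρ : 0 ≤ ρ) (y : E) :
    ∫⁻ x in ball y ρ, edist x y ^ (-b) ∂μ =
      .ofReal (finrank ℝ E * (ρ ^ (finrank ℝ E - b) / (finrank ℝ E - b))) * μ (ball 0 1) := by
  have hne : ∀ᵐ x ∂μ, x ≠ y := by simp [ae_iff]
  calc ∫⁻ x in ball y ρ, edist x y ^ (-b) ∂μ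
      = ∫⁻ x, (ball 0 ρ).indicator (fun x => ENNReal.ofReal (‖x‖ ^ (-b))) (x - y) ∂μ := by
        rw [← lintegral_indicator measurableSet_ball]
        refine lintegral_congr_ae (hne.mono fun x hx => ?_)
        simp only [indicator, mem_ball_iff_norm, sub_zero]
        rw [edist_eq_enorm_sub, ← ofReal_norm, ENNReal.ofReal_rpow_of_pos (by simpa [sub_eq_zero])]
    _ = ∫⁻ x in ball 0 ρ, ENNReal.ofReal (‖x‖ ^ (-b)) ∂μ := by
        rw [lintegral_sub_right_eq_self, lintegral_indicator measurableSet_ball]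
    _ = _ := by
        rw [← ofReal_integral_eq_lintegral_ofReal (integrableOn_norm_rpow_neg_ball μ hb ρ)
          (.of_forall fun x => by positivity), setIntegral_norm_rpow_neg_ball μ hb hρ,
          ENNReal.ofReal_mul' measureReal_nonneg, ofReal_measureReal measure_ball_lt_top.ne]

lemma setLIntegral_infEDist_rpow_neg_le_add (hb0 : 0 ≤ b) (hb : b < finrank ℝ E) (hρ : 0 ≤ ρ)
    (S : Set E) (t : Finset E) :
    ∫⁻ x in S, infEDist x t ^ (-b) ∂μ ≤ ENNReal.ofReal ρ ^ (-b) * μ S +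
      #t * (.ofReal (finrank ℝ E * (ρ ^ (finrank ℝ E - b) / (finrank ℝ E - b))) * μ (ball 0 1)) :=
  calc ∫⁻ x in S, infEDist x t ^ (-b) ∂μ
      ≤ ∫⁻ x in S, (ENNReal.ofReal ρ ^ (-b) +
          ∑ y ∈ t, (ball y ρ).indicator (fun x => edist x y ^ (-b)) x) ∂μ :=
        lintegral_mono (infEDist_rpow_neg_le hb0 ρ t)
    _ = ENNReal.ofReal ρ ^ (-b) * μ S +
          ∑ y ∈ t, ∫⁻ x in S, (ball y ρ).indicator (fun x => edist x y ^ (-b)) x ∂μ := by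
        rw [lintegral_add_left measurable_const, setLIntegral_const, lintegral_finsetSum t]
        exact fun y _ => Measurable.indicator (by fun_prop) measurableSet_ball
    _ ≤ ENNReal.ofReal ρ ^ (-b) * μ S + ∑ y ∈ t, ∫⁻ x in ball y ρ, edist x y ^ (-b) ∂μ := by
        refine add_le_add le_rfl (Finset.sum_le_sum fun y _ => ?_)
        exact (setLIntegral_le_lintegral _ _).trans_eq (lintegral_indicator measurableSet_ball _)
    _ = _ := by simp only [setLIntegral_edist_rpow_neg_ball μ hb hρ, Finset.sum_const, nsmul_eq_mul]

theorem setLIntegral_infEDist_rpow_neg_le (hb0 : 0 ≤ b) (hb : b < finrank ℝ E) (S : Set E)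
    {t : Finset E} {n : ℕ} (ht : #t ≤ n) (hn : n ≠ 0) :
    ∫⁻ x in S, infEDist x t ^ (-b) ∂μ ≤
      .ofReal (finrank ℝ E / (finrank ℝ E - b) * (n : ℝ) ^ (b / finrank ℝ E)) *
        (μ S + μ (ball 0 1)) := by
  have hd0 : (0 : ℝ) < finrank ℝ E := Nat.cast_pos.2 finrank_pos
  set d : ℝ := (finrank ℝ E : ℝ)
  have hn0 : (0 : ℝ) < n := by positivity
  -- At the scale `n ^ (-1 / d)`, the typical spacing of `n` points, the far and near parts balance.
  set ρ : ℝ := (n : ℝ) ^ (-(1 / d))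
  have hρ : 0 < ρ := by positivity
  have hρb : ρ ^ (-b) = (n : ℝ) ^ (b / d) := by
    rw [← Real.rpow_mul hn0.le]; ring_nf
  have hρd : n * ρ ^ (d - b) = (n : ℝ) ^ (b / d) := by
    rw [← Real.rpow_mul hn0.le, show b / d = 1 + -(1 / d) * (d - b) by field_simp; ring,
      Real.rpow_add hn0, Real.rpow_one]
  have hfar : ENNReal.ofReal ρ ^ (-b) ≤ .ofReal (d / (d - b) * (n : ℝ) ^ (b / d)) := by
    rw [ENNReal.ofReal_rpow_of_pos hρ, hρb]
    gcongr
    exact le_mul_of_one_le_left (by positivity) ((one_le_div (by linarith)).2 (by linarith))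
  have hnear : #t * ENNReal.ofReal (d * (ρ ^ (d - b) / (d - b))) ≤
      .ofReal (d / (d - b) * (n : ℝ) ^ (b / d)) :=
    calc _ ≤ (n : ℝ≥0∞) * ENNReal.ofReal (d * (ρ ^ (d - b) / (d - b))) := by gcongr
      _ = .ofReal (d / (d - b) * (n : ℝ) ^ (b / d)) := by
          rw [← ENNReal.ofReal_natCast, ← ENNReal.ofReal_mul hn0.le, ← hρd]
          ring_nf
  refine (setLIntegral_infEDist_rpow_neg_le_add μ hb0 hb hρ.le S t).trans ?_
  rw [mul_add, ← mul_assoc (#t : ℝ≥0∞)]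
  gcongr

end Haar

section NearestNeighborIntegral

variable {ι : Type*} [Fintype ι]

lemma ofReal_prod_iInf_dist_rpow_neg_le_sum [Nontrivial ι] [DecidableEq ι] {X : Type*}
    [PseudoMetricSpace X] (z : ι → X) {a : ℝ} (ha : 0 ≤ a) :
    ENNReal.ofReal (∏ i, (⨅ j : {j // j ≠ i}, dist (z i) (z j)) ^ (-a)) ≤
      ∑ r : ι → Fin 3 with #{i | r i = 0} = #{i | r i = 1},
        ∏ i, infEDist (z i) (z '' {j | r j < r i}) ^ (-(a * layerWeight (r i))) := by
  have hinf (i : ι) : 0 ≤ ⨅ j : {j // j ≠ i}, dist (z i) (z j) :=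
    Real.iInf_nonneg fun _ => dist_nonneg
  obtain ⟨r, hr, hle⟩ := exists_isBalancedLayering_prod_le (fun i j => dist_comm (z i) (z j))
    fun i => ENNReal.ofReal ((⨅ j : {j // j ≠ i}, dist (z i) (z j)) ^ (-a))
  have hfactor (i : ι) : ENNReal.ofReal ((⨅ j : {j // j ≠ i}, dist (z i) (z j)) ^ (-a)) ^
      layerWeight (r i) ≤ infEDist (z i) (z '' {j | r j < r i}) ^ (-(a * layerWeight (r i))) := by
    by_cases hi : r i = 0
    · simp [hi, layerWeight]
    · obtain ⟨j, hj, hij⟩ := hr.exists_nearest_lt i hi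
      rw [neg_mul_eq_neg_mul, ENNReal.rpow_mul_natCast]
      gcongr
      exact hij.ofReal_iInf_dist_rpow_neg_le hj ha
  rw [ENNReal.ofReal_prod_of_nonneg fun i _ => Real.rpow_nonneg (hinf i) _]
  refine (hle.trans (Finset.prod_le_prod' fun i _ => hfactor i)).trans ?_
  exact Finset.single_le_sum (f := fun r : ι → Fin 3 => ∏ i, infEDist (z i) (z '' {j | r j < r i}) ^
    (-(a * layerWeight (r i)))) (fun _ _ => zero_le) (by simpa using hr.card_eq)

lemma mul_layerWeight_lt {d a : ℝ} (ha : 0 ≤ a) (had : 2 * a < d) (k : Fin 3) :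
    a * layerWeight k < d := by
  fin_cases k <;> simp [layerWeight] <;> linarith

lemma div_sub_mul_layerWeight_le {d a : ℝ} (ha : 0 ≤ a) (had : 2 * a < d) (k : Fin 3) :
    d / (d - a * layerWeight k) ≤ 2 * if k = 1 then d / (d - 2 * a) else 1 := by
  have hd : 0 < d := by linarith
  fin_cases k
  · simp [layerWeight, hd.ne']
  · have hnonneg : 0 ≤ d / (d - 2 * a) := div_nonneg hd.le (by linarith)
    simpa [layerWeight, mul_comm a] using le_mul_of_one_le_left hnonneg one_le_two
  · suffices d / (d - a) ≤ 2 by simpa [layerWeight]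
    rw [div_le_iff₀ (by linarith)]
    linarith

lemma prod_div_sub_mul_rpow_layerWeight_le [Nonempty ι] {d a : ℝ} (hd : 1 ≤ d) (ha : 0 ≤ a)
    (had : 2 * a < d) {r : ι → Fin 3} (hr : #{i | r i = 0} = #{i | r i = 1}) :
    ∏ i, (d / (d - a * layerWeight (r i)) * (Fintype.card ι : ℝ) ^ (a * layerWeight (r i) / d)) ≤
      (2 * d) ^ Fintype.card ι * (d - 2 * a) ^ (-((Fintype.card ι / 2 : ℕ) : ℝ)) *
        (Fintype.card ι : ℝ) ^ (Fintype.card ι * a / d) := by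
  set n := Fintype.card ι
  have hn0 : (0 : ℝ) < n := Nat.cast_pos.2 Fintype.card_pos
  have hgap : 0 < d - 2 * a := by linarith
  have hpow : ∏ i, (n : ℝ) ^ (a * layerWeight (r i) / d) = (n : ℝ) ^ (n * a / d) := by
    rw [← Real.rpow_sum_of_pos hn0, ← Finset.sum_div, ← Finset.mul_sum, ← Nat.cast_sum,
      sum_layerWeight hr, mul_comm a]
  rw [Finset.prod_mul_distrib, hpow]
  gcongr
  calc ∏ i, d / (d - a * layerWeight (r i))
      ≤ ∏ i, 2 * (if r i = 1 then d / (d - 2 * a) else 1) :=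
        Finset.prod_le_prod
          (fun i _ => div_nonneg (by positivity) (by linarith [mul_layerWeight_lt ha had (r i)]))
          fun i _ => div_sub_mul_layerWeight_le ha had (r i)
    _ = 2 ^ n * (d / (d - 2 * a)) ^ #{i | r i = 1} := by
        rw [Finset.prod_mul_distrib, Finset.prod_const, Finset.card_univ, ← Finset.prod_filter,
          Finset.prod_const]
    _ ≤ 2 ^ n * (d / (d - 2 * a)) ^ (n / 2) := by
        gcongr
        · exact (one_le_div hgap).2 (by linarith)
        · exact card_layer_one_le hr
    _ ≤ (2 * d) ^ n * (d - 2 * a) ^ (-((n / 2 : ℕ) : ℝ)) := by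
        rw [div_pow, Real.rpow_neg hgap.le, Real.rpow_natCast, mul_pow, mul_assoc, ← div_eq_mul_inv]
        gcongr
        exact Nat.div_le_self n 2

variable {E : Type*} [NormedAddCommGroup E] [NormedSpace ℝ E] [FiniteDimensional ℝ E]
  [Nontrivial E] [MeasurableSpace E] [BorelSpace E] (μ : Measure E) [μ.IsAddHaarMeasure]

theorem setLIntegral_prod_infEDist_rpow_neg_le {κ : Type*} [LinearOrder κ] (S : Set E) (r : ι → κ)
    {b : ι → ℝ} (hb0 : ∀ i, 0 ≤ b i) (hb : ∀ i, b i < finrank ℝ E) :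
    (∫⁻ z in univ.pi fun _ : ι => S, ∏ i, infEDist (z i) (z '' {j | r j < r i}) ^ (-b i)
        ∂Measure.pi fun _ => μ) ≤
      ∏ i, (.ofReal (finrank ℝ E / (finrank ℝ E - b i) *
        (Fintype.card ι : ℝ) ^ (b i / finrank ℝ E)) * (μ S + μ (ball 0 1))) := by
  classical
  rw [Measure.restrict_pi_pi]
  refine lintegral_prod_le_prod_of_dependsOn r
    (fun i => (measurable_infEDist_image i (toFinite _).countable).pow_const _)
    (fun i _ _ h => congrArg (· ^ (-b i)) (dependsOn_infEDist_image i _ h)) fun i z => ?_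
  have : Nonempty ι := ⟨i⟩
  have hupdate (x : E) : Function.update z i x '' {j | r j < r i} =
      ((Finset.univ.filter (r · < r i)).image z : Finset E) := by
    rw [Finset.coe_image, Finset.coe_filter_univ]
    exact image_congr fun j hj => Function.update_of_ne (by rintro rfl; exact lt_irrefl _ hj) _ _
  simp only [hupdate, Function.update_self]
  exact setLIntegral_infEDist_rpow_neg_le μ (hb0 i) (hb i) S
    (Finset.card_image_le.trans (Finset.card_le_univ _)) Fintype.card_ne_zero

lemma setLIntegral_prod_infEDist_rpow_neg_layerWeight_le [Nonempty ι] {S : Set E} (hS : μ S ≠ ∞)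
    {a : ℝ} (ha : 0 ≤ a) (had : 2 * a < finrank ℝ E) {r : ι → Fin 3}
    (hr : #{i | r i = 0} = #{i | r i = 1}) :
    (∫⁻ z in univ.pi fun _ : ι => S,
        ∏ i, infEDist (z i) (z '' {j | r j < r i}) ^ (-(a * layerWeight (r i)))
        ∂Measure.pi fun _ => μ) ≤
      .ofReal ((2 * finrank ℝ E * (μ.real S + μ.real (ball 0 1))) ^ Fintype.card ι *
        (finrank ℝ E - 2 * a) ^ (-((Fintype.card ι / 2 : ℕ) : ℝ)) *
        (Fintype.card ι : ℝ) ^ (Fintype.card ι * a / finrank ℝ E)) := by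
  have hd : (1 : ℝ) ≤ finrank ℝ E := Nat.one_le_cast.2 finrank_pos
  have hweight (i : ι) := mul_layerWeight_lt ha had (r i)
  refine (setLIntegral_prod_infEDist_rpow_neg_le μ S r (fun i => by positivity) hweight).trans ?_
  have hvol : μ S + μ (ball 0 1) = .ofReal (μ.real S + μ.real (ball 0 1)) := by
    rw [ENNReal.ofReal_add measureReal_nonneg measureReal_nonneg, ofReal_measureReal hS,
      ofReal_measureReal measure_ball_lt_top.ne]
  rw [Finset.prod_mul_distrib, Finset.prod_const, Finset.card_univ, hvol,
    ← ENNReal.ofReal_prod_of_nonneg fun i _ => mul_nonneg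
      (div_nonneg (by positivity) (by linarith [hweight i])) (by positivity),
    ← ENNReal.ofReal_pow (by positivity), ← ENNReal.ofReal_mul' (by positivity),
    mul_pow (2 * _), mul_right_comm _ (_ ^ _) (_ ^ (-_)), mul_right_comm _ (_ ^ _) (_ ^ (_ / _))]
  gcongr
  exact prod_div_sub_mul_rpow_layerWeight_le hd ha had hr

theorem setLIntegral_prod_iInf_dist_rpow_neg_le [Nontrivial ι] {S : Set E} (hS : μ S ≠ ∞) {a : ℝ}
    (ha : 0 ≤ a) (had : 2 * a < finrank ℝ E) :
    (∫⁻ z in univ.pi fun _ : ι => S,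
        ENNReal.ofReal (∏ i, (⨅ j : {j // j ≠ i}, dist (z i) (z j)) ^ (-a))
        ∂Measure.pi fun _ => μ) ≤
      .ofReal ((6 * finrank ℝ E * (μ.real S + μ.real (ball 0 1))) ^ Fintype.card ι *
        (finrank ℝ E - 2 * a) ^ (-((Fintype.card ι / 2 : ℕ) : ℝ)) *
        (Fintype.card ι : ℝ) ^ (Fintype.card ι * a / finrank ℝ E)) := by
  classical
  set d : ℝ := (finrank ℝ E : ℝ)
  set n := Fintype.card ι
  set v := μ.real S + μ.real (ball 0 1)
  calc _ ≤ ∫⁻ z in univ.pi fun _ : ι => S,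
          ∑ r : ι → Fin 3 with #{i | r i = 0} = #{i | r i = 1},
            ∏ i, infEDist (z i) (z '' {j | r j < r i}) ^ (-(a * layerWeight (r i)))
          ∂Measure.pi fun _ => μ :=
        lintegral_mono fun z => ofReal_prod_iInf_dist_rpow_neg_le_sum z ha
    _ = ∑ r : ι → Fin 3 with #{i | r i = 0} = #{i | r i = 1},
          ∫⁻ z in univ.pi fun _ : ι => S, ∏ i, infEDist (z i) (z '' {j | r j < r i}) ^
            (-(a * layerWeight (r i))) ∂Measure.pi fun _ => μ :=
        lintegral_finsetSum _ fun r _ => Finset.measurable_prod _ fun i _ =>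
          (measurable_infEDist_image i (toFinite _).countable).pow_const _
    _ ≤ #{r : ι → Fin 3 | #{i | r i = 0} = #{i | r i = 1}} • .ofReal
          ((2 * d * v) ^ n * (d - 2 * a) ^ (-((n / 2 : ℕ) : ℝ)) * (n : ℝ) ^ (n * a / d)) :=
        Finset.sum_le_card_nsmul _ _ _ fun r hr =>
          setLIntegral_prod_infEDist_rpow_neg_layerWeight_le μ hS ha had (Finset.mem_filter.1 hr).2
    _ ≤ 3 ^ n • .ofReal
          ((2 * d * v) ^ n * (d - 2 * a) ^ (-((n / 2 : ℕ) : ℝ)) * (n : ℝ) ^ (n * a / d)) := by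
        gcongr
        exact (Finset.card_le_univ _).trans_eq (by simp [n])
    _ = _ := by
        rw [← ENNReal.ofReal_nsmul, nsmul_eq_mul, ← mul_assoc, ← mul_assoc, Nat.cast_pow,
          Nat.cast_ofNat, ← mul_pow]
        ring_nf

theorem stmt_5_general {S : Set E} (hS : μ S ≠ ∞) :
    ∃ C : ℝ, 0 < C ∧ ∀ N : ℕ, 2 ≤ N → ∀ β : ℝ, β ^ 2 < finrank ℝ E →
      (∫⁻ z in univ.pi fun _ : Fin N => S,
        ENNReal.ofReal (∏ i, (⨅ j : {j // j ≠ i}, dist (z i) (z j)) ^ (-(β ^ 2) / 2))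
        ∂Measure.pi fun _ => μ) ≤
      .ofReal (C ^ N * (finrank ℝ E - β ^ 2) ^ (-((N / 2 : ℕ) : ℝ)) *
        (N : ℝ) ^ (N * β ^ 2 / (2 * finrank ℝ E))) := by
  have hball : 0 < μ.real (ball 0 1) :=
    ENNReal.toReal_pos (measure_ball_pos μ 0 one_pos).ne' measure_ball_lt_top.ne
  refine ⟨6 * finrank ℝ E * (μ.real S + μ.real (ball 0 1)), ?_, fun N hN β hβ => ?_⟩
  · have : 0 < finrank ℝ E := finrank_pos
    positivity
  · have : Nontrivial (Fin N) := Fin.nontrivial_iff_two_le.2 hN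
    have h := setLIntegral_prod_iInf_dist_rpow_neg_le (ι := Fin N) μ hS (a := β ^ 2 / 2)
      (by positivity) (by linarith)
    have hexp : N * (β ^ 2 / 2) / finrank ℝ E = N * β ^ 2 / (2 * finrank ℝ E) := by ring
    rwa [Fintype.card_fin, ← neg_div, hexp, mul_div_cancel₀ _ two_ne_zero] at h

end NearestNeighborIntegral

/-- **Nearest-neighbour integral bound for imaginary chaos moments.**
There is `C > 0` (depending only on `d`) such that for all `N ≥ 2` and
`β ∈ (0, √d)`,
`∫_{B(0,1)^N} ∏_i (min_{j≠i} |z_i − z_j|)^{−β²/2} dz ≤ C^N (d−β²)^{−⌊N/2⌋} N^{Nβ²/(2d)}`. -/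
theorem stmt_5 (d : ℕ) (hd : 1 ≤ d) :
    ∃ C : ℝ, 0 < C ∧ ∀ N : ℕ, 2 ≤ N → ∀ β : ℝ, 0 < β → β < Real.sqrt d →
      (∫⁻ z : Fin N → EuclideanSpace ℝ (Fin d) in
          Set.univ.pi (fun _ : Fin N => Metric.ball (0 : EuclideanSpace ℝ (Fin d)) 1),
        ENNReal.ofReal (∏ i : Fin N,
          (⨅ j : {j : Fin N // j ≠ i}, dist (z i) (z j.1)) ^ (-(β ^ 2) / 2)))
      ≤ ENNReal.ofReal
          (C ^ N * ((d : ℝ) - β ^ 2) ^ (-((N / 2 : ℕ) : ℝ))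
            * (N : ℝ) ^ ((N : ℝ) * β ^ 2 / (2 * (d : ℝ)))) := by
  have : Nontrivial (EuclideanSpace ℝ (Fin d)) :=
    Module.nontrivial_of_finrank_pos (R := ℝ) (by simpa using Nat.zero_lt_of_lt hd)
  obtain ⟨C, hC, hbound⟩ := stmt_5_general
    (volume : Measure (EuclideanSpace ℝ (Fin d))) (S := ball 0 1) measure_ball_lt_top.ne
  rw [finrank_euclideanSpace_fin] at hbound
  exact ⟨C, hC, fun N hN β hβ hβd => hbound N hN β ((Real.lt_sqrt hβ.le).1 hβd)⟩
end

section
/- Let d ≥ 1. There exists a constant C > 0, depending only on d, such that for every integer N ≥ 2 and every β ∈ (0, √d), ∫_{B(0,1)^N} ∏_{i=1}^N |log min_{j ≠ i} |z_i − z_j||^{1/2} · (min_{j ≠ i} |z_i − z_j|)^{−β²/2} dz_1 … dz_N ≤ C^N (d − β²)^{−2⌊N/2⌋} N^N. -/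
open MeasureTheory

/-!
Breaking ties consistently, every configuration has a nearest-neighbour map `F` whose functional
graph has no cycles other than 2-cycles, and there are at most `N ^ N` such maps. For a fixed `F`
the integrand is a product of edge weights `G |z_i - z_{F i}|`, which is integrated by pruning
leaves: a leaf costs one factor `∫ G`, bounded uniformly in the exponent, and once no leaf is left
each of the remaining 2-cycles costs `∫∫ G ^ 2`, which is of order `(d - β ^ 2) ^ (-2)`: one power
comes from the singularity and one from the logarithm. By Cauchy-Schwarz two leaves may be charged
as one 2-cycle, so the total cost is that of `⌊N / 2⌋` 2-cycles, and of one leaf if `N` is odd.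
-/

open Function Metric Set
open scoped ENNReal

section TwoCycles

variable {ι : Type*}

/-- The functional graph `i → F i` has no loops and all its cycles have length two.
Nearest-neighbour maps, with ties broken consistently, have this form. -/
structure OnlyTwoCycles (F : ι → ι) : Prop where
  ne_self : ∀ i, F i ≠ i
  apply_apply_of_mem_periodicPts : ∀ i ∈ periodicPts F, F (F i) = i

theorem onlyTwoCycles_of_isMin {L : Type*} [LinearOrder L] {w : Sym2 ι → L} (hw : Injective w)
    {F : ι → ι} (hF : ∀ i, F i ≠ i) (hmin : ∀ i, ∀ j ≠ i, w s(i, F i) ≤ w s(i, j)) :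
    OnlyTwoCycles F where
  ne_self := hF
  apply_apply_of_mem_periodicPts i hi := by
    have hdesc (j : ι) : w s(F j, F (F j)) ≤ w s(j, F j) := by
      rw [Sym2.eq_swap (a := j)]
      exact hmin (F j) j (hF j).symm
    have hanti : Antitone fun n ↦ w s(F^[n] i, F (F^[n] i)) :=
      antitone_nat_of_succ_le fun n ↦ by simpa only [iterate_succ_apply'] using hdesc (F^[n] i)
    obtain ⟨n, hn, hper⟩ := hi
    have heq : w s(F i, F (F i)) = w s(i, F i) := by
      refine (hdesc i).antisymm ?_
      simpa [hper.eq] using hanti (Nat.succ_le_of_lt hn)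
    rw [hw.eq_iff, Sym2.eq_swap (a := i), Sym2.congr_right] at heq
    exact heq

theorem OnlyTwoCycles.exists_leaf_or_involutive {F : ι → ι} (hF : OnlyTwoCycles F) {s : Finset ι}
    (hs : MapsTo F s s) : (∃ i ∈ s, ∀ j ∈ s, F j ≠ i) ∨ ∀ i ∈ s, F (F i) = i := by
  by_contra! ⟨hsurj, i, hi, hne⟩
  refine hne (hF.apply_apply_of_mem_periodicPts i ?_)
  have hbij : Injective (hs.restrict F s s) := by
    refine Finite.injective_iff_surjective.2 ?_
    rw [hs.restrict_surjective_iff]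
    exact fun j hj ↦ hsurj j hj
  obtain ⟨n, hn, hper⟩ := hbij.mem_periodicPts ⟨i, hi⟩
  refine ⟨n, hn, ?_⟩
  have := congrArg Subtype.val hper.eq
  rwa [hs.iterate_restrict, MapsTo.val_restrict_apply] at this

theorem OnlyTwoCycles.induction [DecidableEq ι] {F : ι → ι} (hF : OnlyTwoCycles F)
    {motive : (s : Finset ι) → MapsTo F s s → Prop}
    (empty : motive ∅ (by simp))
    (leaf : ∀ i s, i ∉ s → (∀ j ∈ insert i s, F j ≠ i) → ∀ hi hs, motive s hs →
      motive (insert i s) hi)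
    (pair : ∀ i s, i ∉ s → F i ∉ s → F (F i) = i → (∀ j ∈ s, F j ≠ i ∧ F j ≠ F i) →
      ∀ hi hs, motive s hs → motive (insert i (insert (F i) s)) hi)
    (s : Finset ι) (hs : MapsTo F s s) : motive s hs := by
  induction s using Finset.strongInduction with | H s ih => ?_
  rcases s.eq_empty_or_nonempty with rfl | ⟨i, hi⟩
  · exact empty
  rcases hF.exists_leaf_or_involutive hs with ⟨i, hi, hleaf⟩ | hinv
  · obtain ⟨t, hit, rfl⟩ : ∃ t, i ∉ t ∧ insert i t = s :=
      ⟨s.erase i, s.notMem_erase i, Finset.insert_erase hi⟩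
    have ht : MapsTo F t t := fun j hj ↦
      (Finset.mem_insert.1 (hs (Finset.mem_insert_of_mem hj))).resolve_left
        (hleaf j (Finset.mem_insert_of_mem hj))
    exact leaf i t hit hleaf _ _ (ih t (Finset.ssubset_insert hit) ht)
  · have hne : F i ∈ s.erase i := Finset.mem_erase.2 ⟨hF.ne_self i, hs hi⟩
    obtain ⟨t, hit, hFit, rfl⟩ : ∃ t, i ∉ t ∧ F i ∉ t ∧ insert i (insert (F i) t) = s :=
      ⟨(s.erase i).erase (F i), by simp, by simp, by
        rw [Finset.insert_erase hne, Finset.insert_erase hi]⟩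
    have havoid : ∀ j ∈ t, F j ≠ i ∧ F j ≠ F i := by grind
    have ht : MapsTo F t t := fun j hj ↦ by
      have := @hs j
      grind
    refine pair i t hit hFit (hinv i hi) havoid _ _ (ih t ?_ ht)
    grind

end TwoCycles

section NearestNeighbor

variable {ι E : Type*} [PseudoMetricSpace E]

/-- The distance from `z i` to the nearest of the other points of the configuration `z`. -/
noncomputable def nearestNeighborDist (z : ι → E) (i : ι) : ℝ :=
  ⨅ j : {j : ι // j ≠ i}, dist (z i) (z j.1)

theorem nearestNeighborDist_nonneg (z : ι → E) (i : ι) : 0 ≤ nearestNeighborDist z i :=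
  Real.iInf_nonneg fun _ ↦ dist_nonneg

theorem nearestNeighborDist_eq {z : ι → E} {i j : ι} (hij : j ≠ i)
    (hmin : ∀ k ≠ i, dist (z i) (z j) ≤ dist (z i) (z k)) :
    nearestNeighborDist z i = dist (z i) (z j) :=
  IsLeast.csInf_eq ⟨⟨⟨j, hij⟩, rfl⟩, by rintro _ ⟨⟨k, hk⟩, rfl⟩; exact hmin k hk⟩

theorem nearestNeighborDist_lt_of_mem_ball [Nontrivial ι] {z : ι → E} {x : E} {R : ℝ}
    (hz : ∀ i, z i ∈ ball x R) (i : ι) : nearestNeighborDist z i < 2 * R := by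
  obtain ⟨j, hj⟩ := exists_ne i
  calc nearestNeighborDist z i ≤ dist (z i) (z j) :=
        ciInf_le ⟨0, forall_mem_range.2 fun _ ↦ dist_nonneg⟩ (⟨j, hj⟩ : {j : ι // j ≠ i})
    _ ≤ dist (z i) x + dist (z j) x := dist_triangle_right _ _ _
    _ < R + R := add_lt_add (hz i) (hz j)
    _ = 2 * R := (two_mul R).symm

theorem exists_onlyTwoCycles_nearestNeighborDist_eq [Finite ι] [Nontrivial ι] (z : ι → E) :
    ∃ F : ι → ι, OnlyTwoCycles F ∧ ∀ i, nearestNeighborDist z i = dist (z i) (z (F i)) := by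
  obtain ⟨e, he⟩ := Countable.exists_injective_nat (Sym2 ι)
  let d : Sym2 ι → ℝ := Sym2.lift ⟨fun i j ↦ dist (z i) (z j), fun i j ↦ dist_comm _ _⟩
  -- Comparing distances first and labels of pairs second breaks ties consistently.
  let w : Sym2 ι → ℝ ×ₗ ℕ := fun p ↦ toLex (d p, e p)
  have hw : Injective w := fun p q h ↦ he (congrArg (fun t ↦ (ofLex t).2) h)
  have hmin (i : ι) : ∃ j, j ≠ i ∧ ∀ k ≠ i, w s(i, j) ≤ w s(i, k) :=
    exists_min_image {j | j ≠ i} (fun j ↦ w s(i, j)) (toFinite _) (exists_ne i)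
  choose F hne hmin using hmin
  refine ⟨F, onlyTwoCycles_of_isMin hw hne hmin, fun i ↦ ?_⟩
  refine nearestNeighborDist_eq (hne i) fun k hk ↦ ?_
  exact Prod.Lex.monotone_fst _ _ (hmin i k hk)

end NearestNeighbor

theorem mul_pow_mod_two_mul_pow_div_two_le {A P : ℝ≥0∞} (hAP : A ^ 2 ≤ P) (n : ℕ) :
    A * (A ^ (n % 2) * P ^ (n / 2)) ≤ A ^ ((n + 1) % 2) * P ^ ((n + 1) / 2) := by
  rcases n.even_or_odd' with ⟨m, rfl | rfl⟩
  · simp [Nat.add_mod, show (2 * m + 1) / 2 = m by omega]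
  · calc A * (A ^ ((2 * m + 1) % 2) * P ^ ((2 * m + 1) / 2)) = A ^ 2 * P ^ m := by
          rw [show (2 * m + 1) % 2 = 1 by omega, show (2 * m + 1) / 2 = m by omega]
          ring
      _ ≤ P * P ^ m := by gcongr
      _ = A ^ ((2 * m + 1 + 1) % 2) * P ^ ((2 * m + 1 + 1) / 2) := by
          rw [show (2 * m + 1 + 1) % 2 = 0 by omega, show (2 * m + 1 + 1) / 2 = m + 1 by omega]
          ring

theorem pow_mod_two_mul_pow_div_two_le_ofReal {A P : ℝ≥0∞} {c τ : ℝ} (hc : 1 ≤ c) (hτ : 0 ≤ τ)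
    (hA : A ≤ ENNReal.ofReal c) (hP : P ≤ ENNReal.ofReal (c * τ)) (n : ℕ) :
    A ^ (n % 2) * P ^ (n / 2) ≤ ENNReal.ofReal (c ^ n * τ ^ (n / 2)) :=
  calc A ^ (n % 2) * P ^ (n / 2)
      ≤ ENNReal.ofReal c ^ (n % 2) * ENNReal.ofReal (c * τ) ^ (n / 2) := by gcongr
    _ = ENNReal.ofReal (c ^ (n % 2 + n / 2) * τ ^ (n / 2)) := by
        rw [← ENNReal.ofReal_pow (by positivity), ← ENNReal.ofReal_pow (by positivity),
          ← ENNReal.ofReal_mul (by positivity)]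
        ring_nf
    _ ≤ ENNReal.ofReal (c ^ n * τ ^ (n / 2)) := by
        gcongr ENNReal.ofReal (?_ * _)
        exact pow_le_pow_right₀ hc (by omega)

section EdgeProd

variable {ι E : Type*} [DecidableEq ι]

/-- The product of the edge weights `k (z i) (z (F i))` of the functional graph of `F` over the
edges issued from `s`. -/
noncomputable def edgeProd (k : E → E → ℝ≥0∞) (F : ι → ι) (s : Finset ι) (z : ι → E) : ℝ≥0∞ :=
  ∏ i ∈ s, k (z i) (z (F i))

theorem edgeProd_insert {k : E → E → ℝ≥0∞} {F : ι → ι} {s : Finset ι} {i : ι} (hi : i ∉ s)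
    (z : ι → E) : edgeProd k F (insert i s) z = k (z i) (z (F i)) * edgeProd k F s z :=
  Finset.prod_insert hi

theorem edgeProd_update {k : E → E → ℝ≥0∞} {F : ι → ι} {s : Finset ι} {i : ι} (hi : i ∉ s)
    (hFi : ∀ j ∈ s, F j ≠ i) (z : ι → E) (x : E) :
    edgeProd k F s (update z i x) = edgeProd k F s z :=
  Finset.prod_congr rfl fun j hj ↦ by
    rw [update_of_ne (ne_of_mem_of_not_mem hj hi), update_of_ne (hFi j hj)]

variable [MeasurableSpace E] {k : E → E → ℝ≥0∞} (hk : Measurable (uncurry k)) {F : ι → ι}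
  {μ : Measure E}

include hk

omit [DecidableEq ι] in
theorem measurable_edgeProd (s : Finset ι) : Measurable (edgeProd k F s) :=
  Finset.measurable_fun_prod _ fun i _ ↦
    show Measurable fun z : ι → E ↦ uncurry k (z i, z (F i)) from
      hk.comp ((measurable_pi_apply i).prodMk (measurable_pi_apply (F i)))

theorem lmarginal_const_mul_edgeProd (c : ℝ≥0∞) (s t : Finset ι) (z : ι → E) :
    (∫⋯∫⁻_t, (fun z ↦ c * edgeProd k F s z) ∂fun _ ↦ μ) z =
      c * (∫⋯∫⁻_t, edgeProd k F s ∂fun _ ↦ μ) z :=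
  lintegral_const_mul c ((measurable_edgeProd hk s).comp measurable_updateFinset)

variable [SigmaFinite μ]

theorem lmarginal_edgeProd_insert_le {A : ℝ≥0∞} (hA : ∀ y, ∫⁻ x, k x y ∂μ ≤ A)
    {s : Finset ι} {i : ι} (hi : i ∉ s) (hFi : ∀ j ∈ insert i s, F j ≠ i) (z : ι → E) :
    (∫⋯∫⁻_insert i s, edgeProd k F (insert i s) ∂fun _ ↦ μ) z ≤
      A * (∫⋯∫⁻_s, edgeProd k F s ∂fun _ ↦ μ) z := by
  rw [Finset.forall_mem_insert] at hFi
  rw [lmarginal_insert' _ (measurable_edgeProd hk _) hi, ← lmarginal_const_mul_edgeProd hk]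
  refine lmarginal_mono (fun z ↦ ?_) z
  simp only [edgeProd_insert hi, edgeProd_update hi hFi.2, update_self, update_of_ne hFi.1]
  rw [lintegral_mul_const _ hk.of_uncurry_right]
  gcongr
  exact hA _

theorem lmarginal_edgeProd_insert_insert_le (hsymm : ∀ x y, k x y = k y x) {P : ℝ≥0∞}
    (hP : ∫⁻ y, ∫⁻ x, k x y ^ 2 ∂μ ∂μ ≤ P) {s : Finset ι} {i j : ι} (hij : i ≠ j)
    (hFi : F i = j) (hFj : F j = i) (hi : i ∉ s) (hj : j ∉ s)
    (hs : ∀ l ∈ s, F l ≠ i ∧ F l ≠ j) (z : ι → E) :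
    (∫⋯∫⁻_insert i (insert j s), edgeProd k F (insert i (insert j s)) ∂fun _ ↦ μ) z ≤
      P * (∫⋯∫⁻_s, edgeProd k F s ∂fun _ ↦ μ) z := by
  have hi' : i ∉ insert j s := by simp [hij, hi]
  have hedge (z : ι → E) (y x : E) :
      edgeProd k F (insert i (insert j s)) (update (update z j y) i x) =
        k x y ^ 2 * edgeProd k F s z := by
    rw [edgeProd_insert hi', edgeProd_insert hj, edgeProd_update hi fun l hl ↦ (hs l hl).1,
      edgeProd_update hj fun l hl ↦ (hs l hl).2, hFi, hFj, update_self, update_of_ne hij.symm,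
      update_self, hsymm y x]
    ring
  have hmeas : Measurable (fun z : ι → E ↦ ∫⁻ x, edgeProd k F (insert i (insert j s))
      (update z i x) ∂μ) := by
    simpa only [lmarginal_singleton] using
      (measurable_edgeProd hk (insert i (insert j s))).lmarginal (fun _ ↦ μ) (s := {i})
  rw [lmarginal_insert' _ (measurable_edgeProd hk _) hi', lmarginal_insert' _ hmeas hj,
    ← lmarginal_const_mul_edgeProd hk]
  refine lmarginal_mono (fun z ↦ ?_) z
  have hsq : Measurable (uncurry fun x y ↦ k x y ^ 2) := hk.pow_const 2
  have hsq_int : Measurable fun y ↦ ∫⁻ x, k x y ^ 2 ∂μ := hsq.lintegral_prod_left'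
  simp only [hedge, lintegral_mul_const _ hsq.of_uncurry_right, lintegral_mul_const _ hsq_int]
  gcongr

theorem lmarginal_edgeProd_le (hsymm : ∀ x y, k x y = k y x) {A P : ℝ≥0∞}
    (hA : ∀ y, ∫⁻ x, k x y ∂μ ≤ A) (hP : ∫⁻ y, ∫⁻ x, k x y ^ 2 ∂μ ∂μ ≤ P) (hAP : A ^ 2 ≤ P)
    (hF : OnlyTwoCycles F) (s : Finset ι) (hs : MapsTo F s s) (z : ι → E) :
    (∫⋯∫⁻_s, edgeProd k F s ∂fun _ ↦ μ) z ≤ A ^ (s.card % 2) * P ^ (s.card / 2) := by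
  induction s, hs using hF.induction with
  | empty => simp [edgeProd]
  | leaf i t hit hleaf _ _ ih =>
    calc (∫⋯∫⁻_insert i t, edgeProd k F (insert i t) ∂fun _ ↦ μ) z
        ≤ A * (∫⋯∫⁻_t, edgeProd k F t ∂fun _ ↦ μ) z :=
          lmarginal_edgeProd_insert_le hk hA hit hleaf z
      _ ≤ A * (A ^ (t.card % 2) * P ^ (t.card / 2)) := by gcongr
      _ ≤ A ^ ((insert i t).card % 2) * P ^ ((insert i t).card / 2) := by
          rw [Finset.card_insert_of_notMem hit]
          exact mul_pow_mod_two_mul_pow_div_two_le hAP _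
  | pair i t hit hFit hinv ht _ _ ih =>
    have hne : i ≠ F i := (hF.ne_self i).symm
    have hcard : (insert i (insert (F i) t)).card = t.card + 2 := by
      rw [Finset.card_insert_of_notMem (by simp [hne, hit]), Finset.card_insert_of_notMem hFit]
    calc (∫⋯∫⁻_insert i (insert (F i) t), edgeProd k F (insert i (insert (F i) t)) ∂fun _ ↦ μ) z
        ≤ P * (∫⋯∫⁻_t, edgeProd k F t ∂fun _ ↦ μ) z :=
          lmarginal_edgeProd_insert_insert_le hk hsymm hP hne rfl hinv hit hFit ht z
      _ ≤ P * (A ^ (t.card % 2) * P ^ (t.card / 2)) := by gcongr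
      _ = A ^ ((t.card + 2) % 2) * P ^ ((t.card + 2) / 2) := by
          rw [Nat.add_mod_right, Nat.add_div_right _ two_pos, pow_succ']
          ring
      _ = _ := by rw [hcard]

omit [DecidableEq ι] in
theorem lintegral_edgeProd_univ_le [Fintype ι] (hsymm : ∀ x y, k x y = k y x) {A P : ℝ≥0∞}
    (hA : ∀ y, ∫⁻ x, k x y ∂μ ≤ A) (hP : ∫⁻ y, ∫⁻ x, k x y ^ 2 ∂μ ∂μ ≤ P) (hAP : A ^ 2 ≤ P)
    (hF : OnlyTwoCycles F) :
    ∫⁻ z, edgeProd k F .univ z ∂Measure.pi (fun _ ↦ μ) ≤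
      A ^ (Fintype.card ι % 2) * P ^ (Fintype.card ι / 2) := by
  classical
  rcases isEmpty_or_nonempty (ι → E) with _ | ⟨⟨z₀⟩⟩
  · simp
  · rw [lintegral_eq_lmarginal_univ z₀]
    exact lmarginal_edgeProd_le hk hsymm hA hP hAP hF .univ (by simp [MapsTo]) z₀

end EdgeProd

theorem sq_lintegral_le_measure_univ_mul_lintegral_sq {α : Type*} [MeasurableSpace α]
    {μ : Measure α} {f : α → ℝ≥0∞} (hf : AEMeasurable f μ) :
    (∫⁻ x, f x ∂μ) ^ 2 ≤ μ univ * ∫⁻ x, f x ^ 2 ∂μ := by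
  have h := ENNReal.lintegral_mul_le_Lp_mul_Lq μ .two_two hf (aemeasurable_const (b := 1))
  simp only [Pi.mul_apply, mul_one, ENNReal.rpow_ofNat, one_pow, lintegral_one] at h
  calc (∫⁻ x, f x ∂μ) ^ 2
      ≤ ((∫⁻ x, f x ^ 2 ∂μ) ^ (1 / 2 : ℝ) * μ univ ^ (1 / 2 : ℝ)) ^ 2 := by gcongr
    _ = μ univ * ∫⁻ x, f x ^ 2 ∂μ := by
        rw [mul_pow, ← ENNReal.rpow_mul_natCast, ← ENNReal.rpow_mul_natCast, mul_comm]
        norm_num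

theorem lintegral_prod_nearestNeighborDist_le {ι E : Type*} [Fintype ι] [Nontrivial ι]
    [PseudoMetricSpace E] [SecondCountableTopology E] [MeasurableSpace E] [OpensMeasurableSpace E]
    (μ : Measure E) [SigmaFinite μ] {G : ℝ → ℝ≥0∞} (hG : Measurable G) :
    ∫⁻ z, ∏ i, G (nearestNeighborDist z i) ∂Measure.pi (fun _ : ι ↦ μ) ≤
      Fintype.card ι ^ Fintype.card ι *
        ((⨆ y, ∫⁻ x, G (dist x y) ∂μ) ^ (Fintype.card ι % 2) *
          (μ univ * ⨆ y, ∫⁻ x, G (dist x y) ^ 2 ∂μ) ^ (Fintype.card ι / 2)) := by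
  classical
  set A := ⨆ y, ∫⁻ x, G (dist x y) ∂μ
  set B := ⨆ y, ∫⁻ x, G (dist x y) ^ 2 ∂μ
  let k : E → E → ℝ≥0∞ := fun x y ↦ G (dist x y)
  have hk : Measurable (uncurry k) := hG.comp measurable_dist
  have hA (y : E) : ∫⁻ x, k x y ∂μ ≤ A := le_iSup (fun y ↦ ∫⁻ x, k x y ∂μ) y
  have hB (y : E) : ∫⁻ x, k x y ^ 2 ∂μ ≤ B := le_iSup (fun y ↦ ∫⁻ x, k x y ^ 2 ∂μ) y
  have hP : ∫⁻ y, ∫⁻ x, k x y ^ 2 ∂μ ∂μ ≤ μ univ * B := by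
    simpa only [lintegral_const, mul_comm] using lintegral_mono hB
  have hAP : A ^ 2 ≤ μ univ * B := by
    rw [ENNReal.iSup_pow_of_ne_zero two_ne_zero]
    exact iSup_le fun y ↦ (sq_lintegral_le_measure_univ_mul_lintegral_sq
      hk.of_uncurry_right.aemeasurable).trans (by gcongr; exact hB y)
  let S : Finset (ι → ι) := Finset.univ.filter OnlyTwoCycles
  have hS : (S.card : ℝ≥0∞) ≤ Fintype.card ι ^ Fintype.card ι := by
    exact_mod_cast (Finset.card_filter_le _ _).trans_eq (by simp)
  calc ∫⁻ z, ∏ i, G (nearestNeighborDist z i) ∂Measure.pi (fun _ : ι ↦ μ)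
      ≤ ∫⁻ z, ∑ F ∈ S, edgeProd k F .univ z ∂Measure.pi (fun _ : ι ↦ μ) := by
        refine lintegral_mono fun z ↦ ?_
        obtain ⟨F, hF, hdist⟩ := exists_onlyTwoCycles_nearestNeighborDist_eq z
        simp only [hdist]
        exact Finset.single_le_sum (f := fun F ↦ edgeProd k F .univ z) (fun _ _ ↦ zero_le)
          (by simpa [S] using hF)
    _ = ∑ F ∈ S, ∫⁻ z, edgeProd k F .univ z ∂Measure.pi (fun _ : ι ↦ μ) :=
        lintegral_finsetSum _ fun _ _ ↦ measurable_edgeProd hk _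
    _ ≤ S.card • (A ^ (Fintype.card ι % 2) * (μ univ * B) ^ (Fintype.card ι / 2)) :=
        Finset.sum_le_card_nsmul S _ _ fun F hF ↦
          lintegral_edgeProd_univ_le hk (fun x y ↦ by simp only [k, dist_comm]) hA hP hAP
            (by simpa [S] using hF)
    _ ≤ _ := by
        rw [nsmul_eq_mul]
        gcongr

theorem rpow_le_mul_exp {t q ε : ℝ} (ht : 0 ≤ t) (hq : 0 ≤ q) (hε : 0 < ε) :
    t ^ q ≤ (q / ε) ^ q * Real.exp (ε * t) := by
  rcases hq.eq_or_lt with rfl | hq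
  · simpa using by positivity
  have hexp : ε * t / q ≤ Real.exp (ε * t / q) := by linarith [Real.add_one_le_exp (ε * t / q)]
  calc t ^ q = (q / ε) ^ q * (ε * t / q) ^ q := by
        rw [← Real.mul_rpow (by positivity) (by positivity)]
        field_simp
    _ ≤ (q / ε) ^ q * Real.exp (ε * t / q) ^ q := by gcongr
    _ = (q / ε) ^ q * Real.exp (ε * t) := by
        rw [← Real.exp_mul, div_mul_cancel₀ _ hq.ne']

theorem abs_log_rpow_le {R r q ε : ℝ} (hR : 1 ≤ R) (hr : 0 < r) (hrR : r ≤ R) (hq : 0 ≤ q)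
    (hε : 0 < ε) : |Real.log r| ^ q ≤ (q / ε) ^ q * R ^ (2 * ε) * r ^ (-ε) := by
  have hR₀ : 0 < R := by linarith
  have habs : |Real.log r| ≤ 2 * Real.log R - Real.log r :=
    abs_le.2 ⟨by linarith [Real.log_nonneg hR], by linarith [Real.log_le_log hr hrR]⟩
  calc |Real.log r| ^ q ≤ (q / ε) ^ q * Real.exp (ε * |Real.log r|) :=
        rpow_le_mul_exp (abs_nonneg _) hq hε
    _ ≤ (q / ε) ^ q * Real.exp (ε * (2 * Real.log R - Real.log r)) := by gcongr
    _ = (q / ε) ^ q * R ^ (2 * ε) * r ^ (-ε) := by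
        rw [Real.rpow_def_of_pos hR₀, Real.rpow_def_of_pos hr, mul_assoc, ← Real.exp_add]
        ring_nf

/-- The kernel `r ↦ |log r| ^ q * r ^ (-a)`, cut off at `r = T`. The cut-off keeps its integrals
over the whole space finite and is harmless for points at mutual distance less than `T`. -/
noncomputable def truncLogPow (T q a : ℝ) : ℝ → ℝ≥0∞ :=
  (Iio T).indicator fun r ↦ ENNReal.ofReal (|Real.log r| ^ q * r ^ (-a))

theorem truncLogPow_of_lt {T r : ℝ} (hr : r < T) (q a : ℝ) :
    truncLogPow T q a r = ENNReal.ofReal (|Real.log r| ^ q * r ^ (-a)) :=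
  indicator_of_mem (mem_Iio.2 hr) _

theorem measurable_truncLogPow (T q a : ℝ) : Measurable (truncLogPow T q a) :=
  Measurable.indicator (by fun_prop) measurableSet_Iio

theorem truncLogPow_sq (T q a : ℝ) {r : ℝ} (hr : 0 ≤ r) :
    truncLogPow T q a r ^ 2 = truncLogPow T (2 * q) (2 * a) r := by
  rcases lt_or_ge r T with hrT | hrT
  · rw [truncLogPow_of_lt hrT, truncLogPow_of_lt hrT, ← ENNReal.ofReal_pow (by positivity), mul_pow,
      ← Real.rpow_mul_natCast (abs_nonneg _), ← Real.rpow_mul_natCast hr]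
    push_cast
    ring_nf
  · simp [truncLogPow, hrT]

theorem setLIntegral_pi_prod_le_lintegral_prod_truncLogPow {ι E : Type*} [Fintype ι]
    [Nontrivial ι] [PseudoMetricSpace E] [MeasurableSpace E] [OpensMeasurableSpace E]
    (μ : Measure E) [SigmaFinite μ] {s : Set E} {x : E} {R : ℝ} (hs : s ⊆ ball x R) (q a : ℝ) :
    ∫⁻ z in univ.pi (fun _ : ι ↦ s), ENNReal.ofReal (∏ i : ι,
        |Real.log (nearestNeighborDist z i)| ^ q * nearestNeighborDist z i ^ (-a))
        ∂Measure.pi (fun _ : ι ↦ μ) ≤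
      ∫⁻ z, ∏ i : ι, truncLogPow (2 * R) q a (nearestNeighborDist z i)
        ∂Measure.pi (fun _ ↦ μ.restrict (ball x R)) := by
  refine (lintegral_mono_set (pi_mono fun _ _ ↦ hs)).trans_eq ?_
  rw [← Measure.restrict_pi_pi (fun _ : ι ↦ μ) fun _ ↦ ball x R]
  refine setLIntegral_congr_fun (.univ_pi fun _ ↦ measurableSet_ball) fun z hz ↦ ?_
  rw [ENNReal.ofReal_prod_of_nonneg fun i _ ↦
    mul_nonneg (by positivity) (Real.rpow_nonneg (nearestNeighborDist_nonneg z i) _)]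
  exact Finset.prod_congr rfl fun i _ ↦
    (truncLogPow_of_lt (nearestNeighborDist_lt_of_mem_ball (fun j ↦ hz j (mem_univ j)) i) q a).symm

section HaarMeasure

variable {E : Type*} [NormedAddCommGroup E] [NormedSpace ℝ E] [FiniteDimensional ℝ E]
  [MeasurableSpace E] [BorelSpace E] (μ : Measure E) [μ.IsAddHaarMeasure]

local notation "dim" => Module.finrank ℝ E

theorem setLIntegral_ball_norm_rpow_neg [Nontrivial E] {γ R : ℝ} (hγ : γ < dim) (hR : 0 ≤ R) :
    ∫⁻ x in ball 0 R, ENNReal.ofReal (‖x‖ ^ (-γ)) ∂μ =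
      ENNReal.ofReal (dim * μ.real (ball 0 1) * (R ^ (dim - γ) / (dim - γ))) := by
  have hd : 1 ≤ dim := Module.finrank_pos
  have hint : IntegrableOn (fun x : E ↦ ‖x‖ ^ (-γ)) (ball 0 R) μ :=
    integrableOn_ball_of_norm_le_rpow (C := 1) hd hγ
      (.of_forall fun x ↦ by simp [abs_of_nonneg (Real.rpow_nonneg (norm_nonneg x) _)])
      (measurable_norm.pow_const _).aestronglyMeasurable
  have hradial : ∀ r ∈ Ioi (0 : ℝ), r ^ (dim - 1) • (Iio R).indicator (· ^ (-γ)) r =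
      (Iio R).indicator (· ^ (dim - γ - 1)) r := by
    intro r hr
    have hmul : r ^ (dim - 1) * r ^ (-γ) = r ^ (dim - γ - 1) := by
      rw [← Real.rpow_natCast, ← Real.rpow_add hr, Nat.cast_sub hd]
      ring_nf
    simp only [indicator, smul_eq_mul, mul_ite, mul_zero, hmul]
  rw [← ofReal_integral_eq_lintegral_ofReal hint
    (.of_forall fun x ↦ Real.rpow_nonneg (norm_nonneg x) _)]
  congr 1
  calc ∫ x in ball 0 R, ‖x‖ ^ (-γ) ∂μ
      = ∫ x, (Iio R).indicator (· ^ (-γ)) ‖x‖ ∂μ := by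
        rw [← integral_indicator measurableSet_ball]
        simp [indicator]
    _ = dim * μ.real (ball 0 1) * ∫ r in Ioi 0, (Iio R).indicator (· ^ (dim - γ - 1)) r := by
        rw [integral_fun_norm_addHaar, setIntegral_congr_fun measurableSet_Ioi hradial,
          nsmul_eq_mul, smul_eq_mul, mul_assoc]
    _ = dim * μ.real (ball 0 1) * ∫ r in 0..R, r ^ (dim - γ - 1) := by
        rw [setIntegral_indicator measurableSet_Iio, Ioi_inter_Iio, ← integral_Ioc_eq_integral_Ioo,
          ← intervalIntegral.integral_of_le hR]
    _ = dim * μ.real (ball 0 1) * (R ^ (dim - γ) / (dim - γ)) := by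
        rw [integral_rpow (.inl (by linarith)), sub_add_cancel, Real.zero_rpow (by linarith),
          sub_zero]

theorem setLIntegral_ball_abs_log_norm_rpow_mul_norm_rpow_neg_le [Nontrivial E] {T q a : ℝ}
    (hT : 1 ≤ T) (hq : 0 ≤ q) (ha₀ : 0 ≤ a) (ha : a < dim) :
    ∫⁻ x in ball 0 T, ENNReal.ofReal (|Real.log ‖x‖| ^ q * ‖x‖ ^ (-a)) ∂μ ≤
      ENNReal.ofReal (2 * dim * μ.real (ball 0 1) * (2 * q) ^ q * T ^ (2 * dim : ℝ) *
        (dim - a) ^ (-(q + 1))) := by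
  have hT₀ : 0 < T := by linarith
  -- Half of the gap `dim - a` pays for the logarithm, the other half for integrability at `0`.
  obtain ⟨ε, hε, hεa⟩ : ∃ ε : ℝ, 0 < ε ∧ dim - a = 2 * ε := ⟨(dim - a) / 2, by linarith, by ring⟩
  set c := (q / ε) ^ q * T ^ (2 * ε)
  have hc : 0 ≤ c := by positivity
  have hle : ∀ᵐ x ∂μ.restrict (ball 0 T), ENNReal.ofReal (|Real.log ‖x‖| ^ q * ‖x‖ ^ (-a)) ≤
      ENNReal.ofReal c * ENNReal.ofReal (‖x‖ ^ (-(a + ε))) := by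
    filter_upwards [ae_restrict_mem measurableSet_ball, ae_restrict_of_ae (μ.ae_ne 0)]
      with x hxT hx₀
    have hx : 0 < ‖x‖ := norm_pos_iff.2 hx₀
    rw [← ENNReal.ofReal_mul hc, neg_add_rev, Real.rpow_add hx, ← mul_assoc]
    gcongr
    exact abs_log_rpow_le hT hx (mem_ball_zero_iff.1 hxT).le hq hε
  calc ∫⁻ x in ball 0 T, ENNReal.ofReal (|Real.log ‖x‖| ^ q * ‖x‖ ^ (-a)) ∂μ
      ≤ ENNReal.ofReal c * ∫⁻ x in ball 0 T, ENNReal.ofReal (‖x‖ ^ (-(a + ε))) ∂μ := by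
        rw [← lintegral_const_mul' _ _ ENNReal.ofReal_ne_top]
        exact lintegral_mono_ae hle
    _ = ENNReal.ofReal (c * (dim * μ.real (ball 0 1) * (T ^ ε / ε))) := by
        rw [setLIntegral_ball_norm_rpow_neg μ (by linarith) hT₀.le, ← ENNReal.ofReal_mul hc,
          show dim - (a + ε) = ε by linarith]
    _ = ENNReal.ofReal (2 * dim * μ.real (ball 0 1) * (2 * q) ^ q * T ^ (3 * ε) *
          (dim - a) ^ (-(q + 1))) := by
        congr 1
        rw [hεa, neg_add, Real.rpow_add (by positivity), Real.rpow_neg_one,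
          Real.rpow_neg (by positivity), show 3 * ε = 2 * ε + ε by ring, Real.rpow_add hT₀]
        simp only [c]
        rw [show q / ε = 2 * q / (2 * ε) by field_simp,
          Real.div_rpow (by positivity) (by positivity)]
        field_simp
    _ ≤ _ := by
        have hpow : T ^ (3 * ε) ≤ T ^ (2 * dim : ℝ) :=
          Real.rpow_le_rpow_of_exponent_le hT (by linarith)
        gcongr

theorem exists_lintegral_truncLogPow_dist_le {T q : ℝ} (hT : 1 ≤ T) (hq : 0 ≤ q) :
    ∃ C : ℝ, 0 ≤ C ∧ ∀ a : ℝ, 0 ≤ a → a < dim → ∀ y,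
      ∫⁻ x, truncLogPow T q a (dist x y) ∂μ ≤ ENNReal.ofReal (C * (dim - a) ^ (-(q + 1))) := by
  refine ⟨2 * dim * μ.real (ball 0 1) * (2 * q) ^ q * T ^ (2 * dim : ℝ), by positivity,
    fun a ha₀ ha y ↦ ?_⟩
  have : Nontrivial E :=
    Module.nontrivial_of_finrank_pos (R := ℝ) (by exact_mod_cast ha₀.trans_lt ha)
  calc ∫⁻ x, truncLogPow T q a (dist x y) ∂μ = ∫⁻ x, truncLogPow T q a ‖x‖ ∂μ := by
        simp only [dist_eq_norm]
        exact lintegral_sub_right_eq_self (fun x ↦ truncLogPow T q a ‖x‖) y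
    _ = ∫⁻ x in ball 0 T, ENNReal.ofReal (|Real.log ‖x‖| ^ q * ‖x‖ ^ (-a)) ∂μ := by
        rw [← lintegral_indicator measurableSet_ball]
        simp [truncLogPow, indicator]
    _ ≤ _ := setLIntegral_ball_abs_log_norm_rpow_mul_norm_rpow_neg_le μ hT hq ha₀ ha

theorem exists_lintegral_truncLogPow_half_le_and_sq_le {T p : ℝ} (hT : 1 ≤ T) (hp : 0 ≤ p) :
    ∃ c : ℝ, 1 ≤ c ∧ ∀ α : ℝ, 0 ≤ α → α < dim → ∀ y,
      ∫⁻ x, truncLogPow T p (α / 2) (dist x y) ∂μ ≤ ENNReal.ofReal c ∧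
      ∫⁻ x, truncLogPow T p (α / 2) (dist x y) ^ 2 ∂μ ≤
        ENNReal.ofReal (c * (dim - α) ^ (-(2 * p + 1))) := by
  obtain ⟨C₁, hC₁, hle₁⟩ := exists_lintegral_truncLogPow_dist_le μ hT hp
  obtain ⟨C₂, hC₂, hle₂⟩ := exists_lintegral_truncLogPow_dist_le μ hT (q := 2 * p) (by positivity)
  set c₁ := C₁ * (dim / 2) ^ (-(p + 1))
  have hc₁ : 0 ≤ c₁ := by positivity
  refine ⟨1 + c₁ + C₂, by linarith, fun α hα₀ hα y ↦ ⟨?_, ?_⟩⟩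
  · calc ∫⁻ x, truncLogPow T p (α / 2) (dist x y) ∂μ
        ≤ ENNReal.ofReal (C₁ * (dim - α / 2) ^ (-(p + 1))) :=
          hle₁ (α / 2) (by linarith) (by linarith) y
      _ ≤ ENNReal.ofReal c₁ := by
          refine ENNReal.ofReal_le_ofReal (mul_le_mul_of_nonneg_left ?_ hC₁)
          exact Real.rpow_le_rpow_of_nonpos (by linarith) (by linarith) (by linarith)
      _ ≤ ENNReal.ofReal (1 + c₁ + C₂) := ENNReal.ofReal_le_ofReal (by linarith)
  · simp only [truncLogPow_sq T p (α / 2) dist_nonneg, mul_div_cancel₀ α two_ne_zero]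
    refine (hle₂ α hα₀ hα y).trans (ENNReal.ofReal_le_ofReal ?_)
    exact mul_le_mul_of_nonneg_right (by linarith) (Real.rpow_nonneg (sub_nonneg.2 hα.le) _)

theorem exists_lintegral_prod_truncLogPow_nearestNeighborDist_le {ν : Measure E} [IsFiniteMeasure ν]
    (hνμ : ν ≤ μ) {T p : ℝ} (hT : 1 ≤ T) (hp : 0 ≤ p) :
    ∃ C : ℝ, 0 < C ∧ ∀ N : ℕ, 2 ≤ N → ∀ α : ℝ, 0 ≤ α → α < dim →
      ∫⁻ z, ∏ i : Fin N, truncLogPow T p (α / 2) (nearestNeighborDist z i)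
          ∂Measure.pi (fun _ ↦ ν) ≤
        ENNReal.ofReal (C ^ N * (dim - α) ^ (-((2 * p + 1) * (N / 2 : ℕ))) * N ^ N) := by
  obtain ⟨c, hc, hle⟩ := exists_lintegral_truncLogPow_half_le_and_sq_le μ hT hp
  set V := ν.real univ
  have hV : 0 ≤ V := measureReal_nonneg
  refine ⟨(1 + V) * c, by positivity, fun N hN α hα₀ hα ↦ ?_⟩
  have : Nontrivial (Fin N) := Fin.nontrivial_iff_two_le.2 hN
  have hgap : 0 < dim - α := by linarith
  set τ := (dim - α) ^ (-(2 * p + 1))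
  have hτ : 0 ≤ τ := by positivity
  have hA : ⨆ y, ∫⁻ x, truncLogPow T p (α / 2) (dist x y) ∂ν ≤ ENNReal.ofReal ((1 + V) * c) :=
    iSup_le fun y ↦ (lintegral_mono' hνμ le_rfl).trans <| (hle α hα₀ hα y).1.trans <|
      ENNReal.ofReal_le_ofReal (by nlinarith)
  have hB : ⨆ y, ∫⁻ x, truncLogPow T p (α / 2) (dist x y) ^ 2 ∂ν ≤ ENNReal.ofReal (c * τ) :=
    iSup_le fun y ↦ (lintegral_mono' hνμ le_rfl).trans (hle α hα₀ hα y).2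
  have hP : ν univ * ⨆ y, ∫⁻ x, truncLogPow T p (α / 2) (dist x y) ^ 2 ∂ν ≤
      ENNReal.ofReal ((1 + V) * c * τ) :=
    calc _ ≤ ν univ * ENNReal.ofReal (c * τ) := by gcongr
      _ = ENNReal.ofReal (V * c * τ) := by
          rw [← ofReal_measureReal, ← ENNReal.ofReal_mul hV, mul_assoc]
      _ ≤ ENNReal.ofReal ((1 + V) * c * τ) := by
          gcongr
          linarith
  calc _ ≤ _ := lintegral_prod_nearestNeighborDist_le ν (measurable_truncLogPow T p (α / 2))
    _ ≤ N ^ N * ENNReal.ofReal (((1 + V) * c) ^ N * τ ^ (N / 2)) := by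
        rw [Fintype.card_fin]
        gcongr
        exact pow_mod_two_mul_pow_div_two_le_ofReal (by nlinarith) hτ hA hP N
    _ = _ := by
        rw [neg_mul_eq_neg_mul, Real.rpow_mul_natCast hgap.le,
          ENNReal.ofReal_mul (q := (N : ℝ) ^ N) (by positivity), ENNReal.ofReal_pow N.cast_nonneg,
          ENNReal.ofReal_natCast, mul_comm]

theorem stmt_6_general {s : Set E} (hs : Bornology.IsBounded s) {p : ℝ} (hp : 0 ≤ p) :
    ∃ C : ℝ, 0 < C ∧ ∀ N : ℕ, 2 ≤ N → ∀ α : ℝ, 0 ≤ α → α < dim →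
      ∫⁻ z in univ.pi (fun _ : Fin N ↦ s), ENNReal.ofReal (∏ i : Fin N,
          |Real.log (nearestNeighborDist z i)| ^ p * nearestNeighborDist z i ^ (-α / 2))
          ∂Measure.pi (fun _ ↦ μ) ≤
        ENNReal.ofReal (C ^ N * (dim - α) ^ (-((2 * p + 1) * (N / 2 : ℕ))) * N ^ N) := by
  obtain ⟨R, hR, hsR⟩ := hs.subset_ball_lt (1 / 2) 0
  have : IsFiniteMeasure (μ.restrict (ball 0 R)) :=
    isFiniteMeasure_restrict.2 measure_ball_lt_top.ne
  obtain ⟨C, hC, hle⟩ := exists_lintegral_prod_truncLogPow_nearestNeighborDist_le μ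
    (ν := μ.restrict (ball 0 R)) Measure.restrict_le_self (T := 2 * R) (by linarith) hp
  refine ⟨C, hC, fun N hN α hα₀ hα ↦ ?_⟩
  have : Nontrivial (Fin N) := Fin.nontrivial_iff_two_le.2 hN
  simp only [neg_div]
  exact (setLIntegral_pi_prod_le_lintegral_prod_truncLogPow μ hsR p (α / 2)).trans
    (hle N hN α hα₀ hα)

end HaarMeasure

/-- **Nearest-neighbour integral bound with square-root logarithmic factors.**
There is `C > 0` (depending only on `d`) such that for all `N ≥ 2` and
`β ∈ (0, √d)`,
`∫_{B(0,1)^N} ∏_i |log min_{j≠i}|z_i−z_j||^{1/2} (min_{j≠i}|z_i−z_j|)^{−β²/2} dz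
  ≤ C^N (d−β²)^{−2⌊N/2⌋} N^N`. -/
theorem stmt_6 (d : ℕ) (hd : 1 ≤ d) :
    ∃ C : ℝ, 0 < C ∧ ∀ N : ℕ, 2 ≤ N → ∀ β : ℝ, 0 < β → β < Real.sqrt d →
      (∫⁻ z : Fin N → EuclideanSpace ℝ (Fin d) in
          Set.univ.pi (fun _ : Fin N => Metric.ball (0 : EuclideanSpace ℝ (Fin d)) 1),
        ENNReal.ofReal (∏ i : Fin N,
          |Real.log (⨅ j : {j : Fin N // j ≠ i}, dist (z i) (z j.1))| ^ ((1 : ℝ) / 2)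
            * (⨅ j : {j : Fin N // j ≠ i}, dist (z i) (z j.1)) ^ (-(β ^ 2) / 2)))
      ≤ ENNReal.ofReal
          (C ^ N * ((d : ℝ) - β ^ 2) ^ (-(2 * ((N / 2 : ℕ) : ℝ)))
            * (N : ℝ) ^ N) := by
  obtain ⟨C, hC, hle⟩ := stmt_6_general (volume : Measure (EuclideanSpace ℝ (Fin d)))
    isBounded_ball (p := 1 / 2) (by norm_num)
  norm_num only [finrank_euclideanSpace_fin] at hle
  exact ⟨C, hC, fun N hN β hβ hβd ↦ hle N hN (β ^ 2) (sq_nonneg β) ((Real.lt_sqrt hβ.le).1 hβd)⟩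
end
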